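/- Let a = {aⱼ} be a summable, non-increasing sequence of positive real numbers with associated Cantor set C_a. For any dimension function h: P₀^h(C_a) = 0 if and only if P^h(C_a) = 0; P₀^h(C_a) = ∞ if and only if P^h(C_a) = ∞; and 0 < P₀^h(C_a) < ∞ if and only if 0 < P^h(C_a) < ∞. -/

import Mathlib

open Set Filter Metric MeasureTheory
open scoped ENNReal NNReal Topology

noncomputable section

/-- The `h`-Hausdorff measure of `E ⊆ ℝ`:
`H^h(E) = lim_{δ→0⁺} inf {Σᵢ h(|Eᵢ|) : E ⊆ ⋃ᵢ Eᵢ, |Eᵢ| ≤ δ}`.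
Since the inner infimum is antitone in `δ`, the limit as `δ → 0⁺` is the
supremum over `0 < δ ≤ A` (the parameter `A` records the domain `(0,A]` of the
dimension function `h`; by monotonicity the value of the limit is unchanged). -/
def Hh (A : ℝ) (h : ℝ → ℝ≥0∞) (E : Set ℝ) : ℝ≥0∞ :=
  ⨆ (δ : ℝ) (_ : 0 < δ) (_ : δ ≤ A),
    ⨅ (t : ℕ → Set ℝ) (_ : E ⊆ ⋃ n, t n) (_ : ∀ n, Metric.diam (t n) ≤ δ),
      ∑' n, h (Metric.diam (t n))

/-- A `δ`-packing of `E`: a countable disjoint family of open balls centered at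
points of `E` with diameters less than `δ`, recorded as a set of
(center, radius) pairs. -/
def IsPacking (E : Set ℝ) (δ : ℝ) (P : Set (ℝ × ℝ)) : Prop :=
  P.Countable ∧ (∀ p ∈ P, p.1 ∈ E ∧ 0 < p.2 ∧ 2 * p.2 < δ) ∧
    P.PairwiseDisjoint fun p => Metric.ball p.1 p.2

/-- The `h`-packing pre-measure of `E ⊆ ℝ`:
`P₀^h(E) = lim_{δ→0⁺} sup {Σᵢ h(|Bᵢ|) : {Bᵢ} is a δ-packing of E}`.
The inner supremum is monotone in `δ`, so the limit as `δ → 0⁺` is the infimum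
over `0 < δ ≤ A`. -/
def P0h (A : ℝ) (h : ℝ → ℝ≥0∞) (E : Set ℝ) : ℝ≥0∞ :=
  ⨅ (δ : ℝ) (_ : 0 < δ) (_ : δ ≤ A),
    ⨆ (P : Set (ℝ × ℝ)) (_ : IsPacking E δ P), ∑' p : P, h (2 * (p : ℝ × ℝ).2)

/-- The `h`-packing measure: `P^h(E) = inf {Σᵢ P₀^h(Eᵢ) : E = ⋃ᵢ Eᵢ}`. -/
def Ph (A : ℝ) (h : ℝ → ℝ≥0∞) (E : Set ℝ) : ℝ≥0∞ :=
  ⨅ (t : ℕ → Set ℝ) (_ : E = ⋃ n, t n), ∑' n, P0h A h (t n)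

/-- `h` is a dimension function with domain `(0, A]`: continuous, increasing,
doubling, positive, with `h(x) → 0` as `x → 0⁺`.  We record partial functions
`(0,A] → (0,∞]` as functions `ℝ → ℝ≥0∞` extended by `0` on nonpositive
arguments (the continuous extension at `0`). -/
structure IsDimFun (A : ℝ) (h : ℝ → ℝ≥0∞) : Prop where
  posA : 0 < A
  zero_of_nonpos : ∀ x : ℝ, x ≤ 0 → h x = 0
  pos : ∀ x ∈ Set.Ioc (0 : ℝ) A, 0 < h x
  continuousOn : ContinuousOn h (Set.Ioc 0 A)
  strictMonoOn : StrictMonoOn h (Set.Ioc 0 A)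
  doubling : ∃ τ : ℝ≥0∞, 0 < τ ∧ τ ≠ ∞ ∧ ∀ x : ℝ, 0 < x → 2 * x ≤ A → τ * h (2 * x) ≤ h x
  tendsto_zero : Tendsto h (nhdsWithin 0 (Set.Ioi 0)) (nhds 0)

/-- `f ≼ h` on `(0, A]`: there is a (finite, positive) constant `c` with
`f(x) ≤ c·h(x)` for all `x ∈ (0,A]`. -/
def FLeq (A : ℝ) (f h : ℝ → ℝ≥0∞) : Prop :=
  ∃ c : ℝ≥0∞, 0 < c ∧ c ≠ ∞ ∧ ∀ x ∈ Set.Ioc (0 : ℝ) A, f x ≤ c * h x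

/-- `f ≡ h` on `(0, A]`: `f ≼ h` and `h ≼ f`. -/
def FEquiv (A : ℝ) (f h : ℝ → ℝ≥0∞) : Prop := FLeq A f h ∧ FLeq A h f

/-- Tail of a series: `rTail a n = Σ_{j ≥ n} a j` (0-based indexing, so the
paper's `r_n`, `n ≥ 1`, is `rTail a (n-1)`). -/
def rTail (a : ℕ → ℝ) (n : ℕ) : ℝ := ∑' k : ℕ, a (n + k)

/-- In the Cantor construction for the gap sequence `a`, the gaps are indexed
by the nodes `m ≥ 1` of the infinite binary tree in heap order (node `m` has
children `2m, 2m+1`), the gap at node `m` having length `a (m-1)`.  `nodeLen a m`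
is the sum of the lengths of all gaps in the subtree rooted at `m`, i.e. the
length of the step interval corresponding to node `m`. -/
def nodeLen (a : ℕ → ℝ) (m : ℕ) : ℝ :=
  ∑' k : ℕ, ∑ i ∈ Finset.range (2 ^ k), a (m * 2 ^ k + i - 1)

/-- Left endpoint of the `j`-th (0 ≤ j < 2^k, left to right) step-`k` interval
in the Cantor construction for the gap sequence `a` (realized in `[0, Σ a]`):
a left child keeps its parent's left endpoint; a right child's interval starts
after its left sibling's interval followed by the parent's gap. -/
def leftEnd (a : ℕ → ℝ) : ℕ → ℕ → ℝ
  | 0, _ => 0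
  | (k + 1), j =>
    if j % 2 = 0 then leftEnd a k (j / 2)
    else leftEnd a k (j / 2) + nodeLen a (2 ^ (k + 1) + j - 1) + a (2 ^ k + j / 2 - 1)

/-- The Cantor set `C_a` associated with a (positive, non-increasing, summable)
sequence `a`, realized inside the interval `[0, Σ a]`: the intersection over
`k` of the unions of the `2^k` step-`k` intervals. -/
def cantorSetOf (a : ℕ → ℝ) : Set ℝ :=
  ⋂ k : ℕ, ⋃ j ∈ Finset.range (2 ^ k),
    Set.Icc (leftEnd a k j) (leftEnd a k j + nodeLen a (2 ^ k + j))

/-- `h` (increasing and continuous on `(0, A]`) is associated to the sequence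
`a`: the sequence `{h(r_n/n)}` is equivalent to `{1/n}`, i.e. there are
constants `0 < c₁, c₂ < ∞` with `c₁ ≤ n · h(r_n/n) ≤ c₂` for all `n ≥ 1`
(0-based: `n ≥ 1` corresponds to `n+1` below). -/
def IsAssociated (A : ℝ) (h : ℝ → ℝ≥0∞) (a : ℕ → ℝ) : Prop :=
  ContinuousOn h (Set.Ioc 0 A) ∧ StrictMonoOn h (Set.Ioc 0 A) ∧
  ∃ c₁ c₂ : ℝ≥0∞, 0 < c₁ ∧ c₂ ≠ ∞ ∧ ∀ n : ℕ,
    c₁ ≤ ((n : ℝ≥0∞) + 1) * h (rTail a n / ((n : ℝ) + 1)) ∧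
    ((n : ℝ≥0∞) + 1) * h (rTail a n / ((n : ℝ) + 1)) ≤ c₂

/-- Weak tail-equivalence: there are positive integers `j, k` with
`r_n^{(a)} ≥ r_{jn}^{(b)}/j` and `r_n^{(b)} ≥ r_{kn}^{(a)}/k` for all `n ≥ 1`
(0-based shift: paper's `r_n` is `rTail · (n-1)`). -/
def WeakTailEquiv (a b : ℕ → ℝ) : Prop :=
  ∃ j k : ℕ, 0 < j ∧ 0 < k ∧
    (∀ n : ℕ, rTail b (j * (n + 1) - 1) / (j : ℝ) ≤ rTail a n) ∧
    (∀ n : ℕ, rTail a (k * (n + 1) - 1) / (k : ℝ) ≤ rTail b n)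

/-- Tail-equivalence: the sequences of tails are equivalent, i.e. the ratios
`r_n^{(a)}/r_n^{(b)}` are bounded above and below by positive constants. -/
def TailEquiv (a b : ℕ → ℝ) : Prop :=
  ∃ c₁ c₂ : ℝ, 0 < c₁ ∧ ∀ n : ℕ,
    c₁ ≤ rTail a n / rTail b n ∧ rTail a n / rTail b n ≤ c₂

/-- The Hausdorff dimension of `E`, computed from the `h_s`-Hausdorff measures,
`h_s(x) = x^s`:  `dim_H E = sup {s > 0 : H^{h_s}(E) = ∞}`. -/
def hausdDim (A : ℝ) (E : Set ℝ) : ℝ≥0∞ :=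
  ⨆ (s : ℝ) (_ : 0 < s) (_ : Hh A (fun x => ENNReal.ofReal (x ^ s)) E = ∞),
    ENNReal.ofReal s

/-- The packing dimension of `E`: `dim_P E = sup {s > 0 : P^{h_s}(E) = ∞}`. -/
def packDim (A : ℝ) (E : Set ℝ) : ℝ≥0∞ :=
  ⨆ (s : ℝ) (_ : 0 < s) (_ : Ph A (fun x => ENNReal.ofReal (x ^ s)) E = ∞),
    ENNReal.ofReal s

/-- The pre-packing dimension of `E`: `dim_{P₀} E = sup {s > 0 : P₀^{h_s}(E) = ∞}`. -/
def prePackDim (A : ℝ) (E : Set ℝ) : ℝ≥0∞ :=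
  ⨆ (s : ℝ) (_ : 0 < s) (_ : P0h A (fun x => ENNReal.ofReal (x ^ s)) E = ∞),
    ENNReal.ofReal s

/-- `f ≼ h` on the set `S`, for real-valued functions. -/
def RLeqOn (S : Set ℝ) (f h : ℝ → ℝ) : Prop :=
  ∃ c : ℝ, 0 < c ∧ ∀ x ∈ S, f x ≤ c * h x

/-- `f ≡ h` on the set `S`, for real-valued functions. -/
def REquivOn (S : Set ℝ) (f h : ℝ → ℝ) : Prop := RLeqOn S f h ∧ RLeqOn S h f

/-- Real-valued version of `IsAssociated`: `h : (0,A] → (0,∞)` is increasing,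
continuous, positive and `{h(r_n/n)} ≡ {1/n}`. -/
def IsAssociatedR (A : ℝ) (h : ℝ → ℝ) (a : ℕ → ℝ) : Prop :=
  ContinuousOn h (Set.Ioc 0 A) ∧ StrictMonoOn h (Set.Ioc 0 A) ∧
  (∀ x ∈ Set.Ioc (0 : ℝ) A, 0 < h x) ∧
  ∃ c₁ c₂ : ℝ, 0 < c₁ ∧ ∀ n : ℕ,
    c₁ ≤ ((n : ℝ) + 1) * h (rTail a n / ((n : ℝ) + 1)) ∧
    ((n : ℝ) + 1) * h (rTail a n / ((n : ℝ) + 1)) ≤ c₂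

end

noncomputable section PrepackingHelpers

/-- The block sums in the definition of `nodeLen`. -/
def blockSum (a : ℕ → ℝ) (m k : ℕ) : ℝ :=
  ∑ i ∈ Finset.range (2 ^ k), a (m * 2 ^ k + i - 1)

lemma nodeLen_eq (a : ℕ → ℝ) (m : ℕ) : nodeLen a m = ∑' k, blockSum a m k := rfl

lemma blockSum_nonneg {a : ℕ → ℝ} (apos : ∀ n, 0 < a n) (m k : ℕ) : 0 ≤ blockSum a m k :=
  Finset.sum_nonneg fun _ _ => (apos _).le

lemma blockSum_anti {a : ℕ → ℝ} (amono : ∀ n, a (n + 1) ≤ a n) {m m' : ℕ} (hm : m ≤ m')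
    (k : ℕ) : blockSum a m' k ≤ blockSum a m k := by
  refine Finset.sum_le_sum fun i _ => antitone_nat_of_succ_le amono ?_
  have : m * 2 ^ k ≤ m' * 2 ^ k := Nat.mul_le_mul_right _ hm
  omega

lemma blockSum_zero (a : ℕ → ℝ) (m : ℕ) : blockSum a m 0 = a (m - 1) := by
  simp [blockSum]

lemma blockSum_succ (a : ℕ → ℝ) (m k : ℕ) :
    blockSum a m (k + 1) = blockSum a (2 * m) k + blockSum a (2 * m + 1) k := by
  unfold blockSum
  rw [show 2 ^ (k + 1) = 2 ^ k + 2 ^ k by ring, Finset.sum_range_add]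
  congr 1
  · refine Finset.sum_congr rfl fun i _ => ?_
    congr 2; ring
  · refine Finset.sum_congr rfl fun i _ => ?_
    congr 2; ring

lemma blockSum_one_partial (a : ℕ → ℝ) (K : ℕ) :
    ∑ k ∈ Finset.range K, blockSum a 1 k = ∑ i ∈ Finset.range (2 ^ K - 1), a i := by
  induction K with
  | zero => simp
  | succ K ih =>
    rw [Finset.sum_range_succ, ih]
    have h1 : 1 ≤ 2 ^ K := Nat.one_le_two_pow
    rw [show 2 ^ (K + 1) - 1 = (2 ^ K - 1) + 2 ^ K by rw [pow_succ]; omega,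
      Finset.sum_range_add]
    congr 1
    unfold blockSum
    refine Finset.sum_congr rfl fun i _ => ?_
    congr 1; omega

lemma summable_blockSum_one {a : ℕ → ℝ} (apos : ∀ n, 0 < a n) (asum : Summable a) :
    Summable (blockSum a 1) := by
  refine summable_of_sum_range_le (c := ∑' i, a i) (fun k => blockSum_nonneg apos 1 k) fun K => ?_
  rw [blockSum_one_partial]
  exact asum.sum_le_tsum _ fun i _ => (apos i).le

lemma summable_blockSum {a : ℕ → ℝ} (apos : ∀ n, 0 < a n) (amono : ∀ n, a (n + 1) ≤ a n)
    (asum : Summable a) {m : ℕ} (hm : 1 ≤ m) : Summable (blockSum a m) :=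
  Summable.of_nonneg_of_le (fun k => blockSum_nonneg apos m k)
    (fun k => blockSum_anti amono hm k) (summable_blockSum_one apos asum)

lemma nodeLen_rec {a : ℕ → ℝ} (apos : ∀ n, 0 < a n) (amono : ∀ n, a (n + 1) ≤ a n)
    (asum : Summable a) {m : ℕ} (hm : 1 ≤ m) :
    nodeLen a m = a (m - 1) + nodeLen a (2 * m) + nodeLen a (2 * m + 1) := by
  simp only [nodeLen_eq]
  rw [(summable_blockSum apos amono asum hm).tsum_eq_zero_add, blockSum_zero]
  simp only [blockSum_succ]
  rw [Summable.tsum_add (summable_blockSum apos amono asum (by omega))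
    (summable_blockSum apos amono asum (by omega))]
  ring

lemma nodeLen_anti {a : ℕ → ℝ} (apos : ∀ n, 0 < a n) (amono : ∀ n, a (n + 1) ≤ a n)
    (asum : Summable a) {m m' : ℕ} (hm : 1 ≤ m) (hmm : m ≤ m') :
    nodeLen a m' ≤ nodeLen a m := by
  simp only [nodeLen_eq]
  exact Summable.tsum_le_tsum (fun k => blockSum_anti amono hmm k)
    (summable_blockSum apos amono asum (hm.trans hmm)) (summable_blockSum apos amono asum hm)

lemma nodeLen_nonneg {a : ℕ → ℝ} (apos : ∀ n, 0 < a n) (m : ℕ) : 0 ≤ nodeLen a m :=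
  tsum_nonneg fun k => blockSum_nonneg apos m k

lemma nodeLen_pos {a : ℕ → ℝ} (apos : ∀ n, 0 < a n) (amono : ∀ n, a (n + 1) ≤ a n)
    (asum : Summable a) {m : ℕ} (hm : 1 ≤ m) : 0 < nodeLen a m := by
  rw [nodeLen_rec apos amono asum hm]
  have := apos (m - 1)
  have := nodeLen_nonneg apos (2 * m)
  have := nodeLen_nonneg apos (2 * m + 1)
  linarith

/-- The maximal length of a step-`k` interval. -/
def maxLen (a : ℕ → ℝ) (k : ℕ) : ℝ := nodeLen a (2 ^ k)

lemma maxLen_tendsto {a : ℕ → ℝ} (apos : ∀ n, 0 < a n) (amono : ∀ n, a (n + 1) ≤ a n)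
    (asum : Summable a) : Tendsto (maxLen a) atTop (𝓝 0) := by
  refine squeeze_zero (fun k => nodeLen_nonneg apos _) (fun k => ?_)
    (tendsto_sum_nat_add (blockSum a 1))
  unfold maxLen
  rw [nodeLen_eq]
  refine Summable.tsum_le_tsum (fun n => ?_)
    (summable_blockSum apos amono asum Nat.one_le_two_pow)
    ((summable_nat_add_iff k).2 (summable_blockSum_one apos asum))
  unfold blockSum
  have : Finset.range (2 ^ n) ⊆ Finset.range (2 ^ (n + k)) :=
    Finset.range_subset_range.2 (Nat.pow_le_pow_right (by norm_num) (by omega))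
  refine le_trans (le_of_eq ?_)
    (Finset.sum_le_sum_of_subset_of_nonneg this fun i _ _ => (apos _).le)
  refine Finset.sum_congr rfl fun i _ => ?_
  congr 2; ring

lemma maxLen_anti {a : ℕ → ℝ} (apos : ∀ n, 0 < a n) (amono : ∀ n, a (n + 1) ≤ a n)
    (asum : Summable a) : Antitone (maxLen a) := fun _ _ hk =>
  nodeLen_anti apos amono asum Nat.one_le_two_pow (Nat.pow_le_pow_right (by norm_num) hk)

lemma maxLen_pos {a : ℕ → ℝ} (apos : ∀ n, 0 < a n) (amono : ∀ n, a (n + 1) ≤ a n)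
    (asum : Summable a) (k : ℕ) : 0 < maxLen a k :=
  nodeLen_pos apos amono asum Nat.one_le_two_pow

/-- Right endpoint of a step interval. -/
def rightEnd (a : ℕ → ℝ) (k j : ℕ) : ℝ := leftEnd a k j + nodeLen a (2 ^ k + j)

lemma leftEnd_even (a : ℕ → ℝ) (k i : ℕ) : leftEnd a (k + 1) (2 * i) = leftEnd a k i := by
  simp [leftEnd]

lemma leftEnd_odd (a : ℕ → ℝ) (k i : ℕ) :
    leftEnd a (k + 1) (2 * i + 1) =
      leftEnd a k i + nodeLen a (2 * (2 ^ k + i)) + a (2 ^ k + i - 1) := by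
  have h1 : (2 * i + 1) % 2 ≠ 0 := by omega
  have h2 : (2 * i + 1) / 2 = i := by omega
  rw [leftEnd, if_neg h1, h2]
  congr 3
  rw [pow_succ]; omega

lemma rightEnd_odd {a : ℕ → ℝ} (apos : ∀ n, 0 < a n) (amono : ∀ n, a (n + 1) ≤ a n)
    (asum : Summable a) (k i : ℕ) : rightEnd a (k + 1) (2 * i + 1) = rightEnd a k i := by
  unfold rightEnd
  have h1 : 1 ≤ 2 ^ k := Nat.one_le_two_pow
  rw [leftEnd_odd, nodeLen_rec apos amono asum (show 1 ≤ 2 ^ k + i by omega),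
    show 2 ^ (k + 1) + (2 * i + 1) = 2 * (2 ^ k + i) + 1 by ring]
  ring

lemma rightEnd_even {a : ℕ → ℝ} (apos : ∀ n, 0 < a n) (amono : ∀ n, a (n + 1) ≤ a n)
    (asum : Summable a) (k i : ℕ) : rightEnd a (k + 1) (2 * i) ≤ rightEnd a k i := by
  unfold rightEnd
  have h1 : 1 ≤ 2 ^ k := Nat.one_le_two_pow
  rw [leftEnd_even, nodeLen_rec apos amono asum (show 1 ≤ 2 ^ k + i by omega),
    show 2 ^ (k + 1) + (2 * i) = 2 * (2 ^ k + i) by ring]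
  have := apos (2 ^ k + i - 1)
  have := nodeLen_nonneg apos (2 * (2 ^ k + i) + 1)
  linarith

lemma leftEnd_le_child {a : ℕ → ℝ} (apos : ∀ n, 0 < a n) (k j : ℕ) :
    leftEnd a k (j / 2) ≤ leftEnd a (k + 1) j := by
  rcases Nat.even_or_odd' j with ⟨i, rfl | rfl⟩
  · rw [leftEnd_even]; simp
  · rw [leftEnd_odd, show (2 * i + 1) / 2 = i by omega]
    have := (apos (2 ^ k + i - 1)).le
    have := nodeLen_nonneg apos (2 * (2 ^ k + i))
    linarith

lemma rightEnd_child_le {a : ℕ → ℝ} (apos : ∀ n, 0 < a n) (amono : ∀ n, a (n + 1) ≤ a n)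
    (asum : Summable a) (k j : ℕ) : rightEnd a (k + 1) j ≤ rightEnd a k (j / 2) := by
  rcases Nat.even_or_odd' j with ⟨i, rfl | rfl⟩
  · rw [show 2 * i / 2 = i by omega]; exact rightEnd_even apos amono asum k i
  · rw [show (2 * i + 1) / 2 = i by omega]; exact (rightEnd_odd apos amono asum k i).le

lemma rightEnd_le_leftEnd_succ {a : ℕ → ℝ} (apos : ∀ n, 0 < a n)
    (amono : ∀ n, a (n + 1) ≤ a n) (asum : Summable a) (k : ℕ) :
    ∀ j, j + 1 < 2 ^ k → rightEnd a k j ≤ leftEnd a k (j + 1) := by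
  induction k with
  | zero => intro j hj; simp at hj
  | succ k ih =>
    intro j hj
    rcases Nat.even_or_odd' j with ⟨i, rfl | rfl⟩
    · unfold rightEnd
      rw [leftEnd_even, leftEnd_odd, show 2 ^ (k + 1) + (2 * i) = 2 * (2 ^ k + i) by ring]
      have := (apos (2 ^ k + i - 1)).le
      linarith
    · rw [rightEnd_odd apos amono asum, show 2 * i + 1 + 1 = 2 * (i + 1) by ring, leftEnd_even]
      apply ih
      rw [pow_succ] at hj; omega

lemma leftEnd_mono {a : ℕ → ℝ} (apos : ∀ n, 0 < a n)
    (amono : ∀ n, a (n + 1) ≤ a n) (asum : Summable a) (k : ℕ) {i j : ℕ} (hij : i ≤ j) :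
    j < 2 ^ k → leftEnd a k i ≤ leftEnd a k j := by
  induction j, hij using Nat.le_induction with
  | base => intro _; exact le_rfl
  | succ j hj ih =>
    intro hlt
    refine (ih (by omega)).trans (le_trans ?_ (rightEnd_le_leftEnd_succ apos amono asum k j hlt))
    have := nodeLen_nonneg apos (2 ^ k + j)
    unfold rightEnd; linarith

lemma sep_of_far {a : ℕ → ℝ} (apos : ∀ n, 0 < a n)
    (amono : ∀ n, a (n + 1) ≤ a n) (asum : Summable a) {k i j : ℕ} (hij : i + 2 ≤ j)
    (hj : j < 2 ^ k) {x y : ℝ} (hx : x ≤ rightEnd a k i) (hy : leftEnd a k j ≤ y) :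
    maxLen a (k + 1) ≤ y - x := by
  have h1 := rightEnd_le_leftEnd_succ apos amono asum k i (by omega)
  have h2 := rightEnd_le_leftEnd_succ apos amono asum k (i + 1) (by omega)
  have h3 := leftEnd_mono apos amono asum k hij hj
  have h4 : maxLen a (k + 1) ≤ nodeLen a (2 ^ k + (i + 1)) := by
    refine nodeLen_anti apos amono asum (by omega) ?_
    rw [pow_succ]; omega
  unfold rightEnd at h2
  have h5 : leftEnd a k (i + 2) = leftEnd a k (i + 1 + 1) := rfl
  linarith

/-- Index of the dyadic interval. -/
def dyIdx (k : ℕ) (t : ℝ) : ℕ := ⌊t * 2 ^ k⌋₊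

lemma dyIdx_succ (k : ℕ) (t : ℝ) : dyIdx (k + 1) t / 2 = dyIdx k t := by
  unfold dyIdx
  have := Nat.floor_div_natCast (t * 2 ^ (k + 1)) 2
  rw [← this]
  congr 1
  rw [pow_succ]; push_cast; ring

lemma dyIdx_lt {k : ℕ} {t : ℝ} (ht : t ∈ Ico (0 : ℝ) 1) : dyIdx k t < 2 ^ k := by
  unfold dyIdx
  rw [Nat.floor_lt (mul_nonneg ht.1 (by positivity))]
  push_cast
  have : (0 : ℝ) < 2 ^ k := by positivity
  nlinarith [ht.2]

/-- The coding map from `[0,1)` to the Cantor set. -/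
def codeMap (a : ℕ → ℝ) (t : ℝ) : ℝ := ⨆ k, leftEnd a k (dyIdx k t)

lemma codeMap_mem {a : ℕ → ℝ} (apos : ∀ n, 0 < a n)
    (amono : ∀ n, a (n + 1) ≤ a n) (asum : Summable a) (t : ℝ) (k : ℕ) :
    codeMap a t ∈ Icc (leftEnd a k (dyIdx k t)) (rightEnd a k (dyIdx k t)) := by
  have h1 : Monotone fun k => leftEnd a k (dyIdx k t) := by
    refine monotone_nat_of_le_succ fun k => ?_
    rw [← dyIdx_succ]; exact leftEnd_le_child apos _ _
  have h2 : Antitone fun k => rightEnd a k (dyIdx k t) := by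
    refine antitone_nat_of_succ_le fun k => ?_
    rw [← dyIdx_succ k]; exact rightEnd_child_le apos amono asum _ _
  have h3 : (fun k => leftEnd a k (dyIdx k t)) ≤ fun k => rightEnd a k (dyIdx k t) := by
    intro k
    have := nodeLen_nonneg apos (2 ^ k + dyIdx k t)
    simp only [rightEnd]; linarith
  exact mem_iInter.1 (h1.ciSup_mem_iInter_Icc_of_antitone h2 h3) k

lemma codeMap_mem_cantor {a : ℕ → ℝ} (apos : ∀ n, 0 < a n)
    (amono : ∀ n, a (n + 1) ≤ a n) (asum : Summable a) {t : ℝ} (ht : t ∈ Ico (0 : ℝ) 1) :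
    codeMap a t ∈ cantorSetOf a := by
  unfold cantorSetOf
  refine mem_iInter.2 fun k => ?_
  refine mem_biUnion (x := dyIdx k t) (by simpa using dyIdx_lt ht) ?_
  exact codeMap_mem apos amono asum t k

lemma codeMap_measurable {a : ℕ → ℝ} (apos : ∀ n, 0 < a n)
    (amono : ∀ n, a (n + 1) ≤ a n) (asum : Summable a) : Measurable (codeMap a) := by
  have h1 : ∀ t, Monotone fun k => leftEnd a k (dyIdx k t) := by
    intro t
    refine monotone_nat_of_le_succ fun k => ?_
    rw [← dyIdx_succ]; exact leftEnd_le_child apos _ _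
  refine measurable_of_tendsto_metrizable (f := fun k t => leftEnd a k (dyIdx k t)) (fun k => ?_) ?_
  · have : Measurable (leftEnd a k) := measurable_from_top
    refine this.comp ?_
    unfold dyIdx
    exact Nat.measurable_floor.comp (measurable_id.mul_const _)
  · rw [tendsto_pi_nhds]
    intro t
    refine tendsto_atTop_ciSup (h1 t) ⟨codeMap a t, ?_⟩
    rintro _ ⟨k, rfl⟩
    exact (codeMap_mem apos amono asum t k).1

/-- The dyadic interval. -/
def dyInt (k j : ℕ) : Set ℝ := Ico ((j : ℝ) / 2 ^ k) (((j : ℝ) + 1) / 2 ^ k)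

lemma volume_dyInt (k j : ℕ) : volume (dyInt k j) = (2 ^ k)⁻¹ := by
  unfold dyInt
  rw [Real.volume_Ico, show ((j : ℝ) + 1) / 2 ^ k - (j : ℝ) / 2 ^ k = (2 ^ k)⁻¹ by ring,
    ENNReal.ofReal_inv_of_pos (by positivity), ENNReal.ofReal_pow (by norm_num)]
  simp

lemma dyIdx_of_mem {k j : ℕ} {t : ℝ} (ht : t ∈ dyInt k j) : dyIdx k t = j := by
  have h2 : (0 : ℝ) < 2 ^ k := by positivity
  unfold dyInt at ht
  rw [mem_Ico, div_le_iff₀ h2, lt_div_iff₀ h2] at ht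
  exact (Nat.floor_eq_iff (le_trans (by positivity) ht.1)).2 ht

lemma mem_dyInt {k : ℕ} {t : ℝ} (ht : 0 ≤ t) : t ∈ dyInt k (dyIdx k t) := by
  have h2 : (0 : ℝ) < 2 ^ k := by positivity
  unfold dyInt
  rw [mem_Ico, div_le_iff₀ h2, lt_div_iff₀ h2]
  exact ⟨Nat.floor_le (by positivity), Nat.lt_floor_add_one _⟩

lemma dyInt_subset {k j : ℕ} (hj : j < 2 ^ k) : dyInt k j ⊆ Ico (0 : ℝ) 1 := by
  have h2 : (0 : ℝ) < 2 ^ k := by positivity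
  refine Ico_subset_Ico (by positivity) ?_
  rw [div_le_one h2]
  exact_mod_cast hj

/-- The limsup controlling everything. -/
def limQ (a : ℕ → ℝ) (h : ℝ → ℝ≥0∞) : ℝ≥0∞ :=
  limsup (fun k : ℕ => (2 : ℝ≥0∞) ^ k * h (maxLen a k)) atTop

/-- The mass of a set. -/
def massOf (a : ℕ → ℝ) (E : Set ℝ) : ℝ≥0∞ := volume (codeMap a ⁻¹' E ∩ Ico (0 : ℝ) 1)

lemma massOf_le {a : ℕ → ℝ} (apos : ∀ n, 0 < a n)
    (amono : ∀ n, a (n + 1) ≤ a n) (asum : Summable a) (E : Set ℝ) (k : ℕ) (J : Finset ℕ)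
    (hJ : ∀ j < 2 ^ k, (E ∩ Icc (leftEnd a k j) (rightEnd a k j)).Nonempty → j ∈ J) :
    massOf a E * 2 ^ k ≤ J.card := by
  have : massOf a E ≤ ∑ j ∈ J, volume (dyInt k j) := by
    refine le_trans (measure_mono ?_) (measure_biUnion_finset_le J _)
    rintro t ⟨htE, ht⟩
    refine mem_biUnion (x := dyIdx k t) ?_ (mem_dyInt ht.1)
    exact hJ _ (dyIdx_lt ht) ⟨_, htE, codeMap_mem apos amono asum t k⟩
  simp only [volume_dyInt, Finset.sum_const, nsmul_eq_mul] at this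
  calc massOf a E * 2 ^ k ≤ (J.card * (2 ^ k)⁻¹) * 2 ^ k := by gcongr
    _ = J.card := by
      rw [mul_assoc, ENNReal.inv_mul_cancel (by simp) (by finiteness), mul_one]

lemma card_mul_le_sup {a : ℕ → ℝ} (apos : ∀ n, 0 < a n)
    (amono : ∀ n, a (n + 1) ≤ a n) (asum : Summable a) (h : ℝ → ℝ≥0∞) (E : Set ℝ) (k : ℕ)
    (δ : ℝ) (hδ : maxLen a (k + 1) < δ) (J : Finset ℕ) (hlt : ∀ j ∈ J, j < 2 ^ k)
    (hne : ∀ j ∈ J, (E ∩ Icc (leftEnd a k j) (rightEnd a k j)).Nonempty)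
    (hpar : ∀ i ∈ J, ∀ j ∈ J, i % 2 = j % 2) :
    J.card * h (maxLen a (k + 1)) ≤
      ⨆ (P : Set (ℝ × ℝ)) (_ : IsPacking E δ P), ∑' p : P, h (2 * (p : ℝ × ℝ).2) := by
  classical
  choose! x hx using hne
  have hpos := maxLen_pos apos amono asum (k + 1)
  have hsep : ∀ i ∈ J, ∀ j ∈ J, i < j → maxLen a (k + 1) ≤ x j - x i := by
    intro i hi j hj hij
    have := hpar i hi j hj
    exact sep_of_far apos amono asum (by omega) (hlt j hj) (hx i hi).2.2 (hx j hj).2.1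
  have hdist : ∀ i ∈ J, ∀ j ∈ J, i ≠ j → maxLen a (k + 1) ≤ dist (x i) (x j) := by
    intro i hi j hj hij
    rw [Real.dist_eq]
    rcases lt_or_gt_of_ne hij with h1 | h1
    · rw [abs_sub_comm]; exact (hsep i hi j hj h1).trans (le_abs_self _)
    · exact (hsep j hj i hi h1).trans (le_abs_self _)
  let F : ℕ → ℝ × ℝ := fun j => (x j, maxLen a (k + 1) / 2)
  have hinj : Set.InjOn F J := by
    intro i hi j hj hij
    by_contra hne
    have h1 := hdist i hi j hj hne
    have h2 : x i = x j := congrArg Prod.fst hij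
    rw [h2, dist_self] at h1
    linarith
  have hpack : IsPacking E δ (↑(J.image F) : Set (ℝ × ℝ)) := by
    refine ⟨Finset.countable_toSet _, ?_, ?_⟩
    · intro p hp
      obtain ⟨j, hj, rfl⟩ := Finset.mem_image.1 (Finset.mem_coe.1 hp)
      refine ⟨(hx j hj).1, by simp only [F]; linarith, by simp only [F]; linarith⟩
    · intro p hp q hq hpq
      obtain ⟨i, hi, rfl⟩ := Finset.mem_image.1 (Finset.mem_coe.1 hp)
      obtain ⟨j, hj, rfl⟩ := Finset.mem_image.1 (Finset.mem_coe.1 hq)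
      have hij : i ≠ j := fun e => hpq (by rw [e])
      refine Metric.ball_disjoint_ball ?_
      have := hdist i hi j hj hij
      simp only [F]; linarith
  refine le_trans (le_of_eq ?_) (le_iSup₂_of_le _ hpack le_rfl)
  have h3 : ∑' p : (↑(J.image F) : Set (ℝ × ℝ)), h (2 * (p : ℝ × ℝ).2)
      = ∑ p ∈ J.image F, h (2 * p.2) :=
    Finset.tsum_subtype' (J.image F) (fun p : ℝ × ℝ => h (2 * p.2))
  rw [h3, Finset.sum_image hinj]
  simp only [F, Finset.sum_const, nsmul_eq_mul]
  congr 2; ring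

lemma limQ_mul_mass_le {a : ℕ → ℝ} (apos : ∀ n, 0 < a n)
    (amono : ∀ n, a (n + 1) ≤ a n) (asum : Summable a) (A : ℝ) (h : ℝ → ℝ≥0∞) (E : Set ℝ) :
    limQ a h * massOf a E ≤ 4 * P0h A h E := by
  classical
  have key : ∀ δ : ℝ, 0 < δ → limQ a h * massOf a E ≤ 4 *
      ⨆ (P : Set (ℝ × ℝ)) (_ : IsPacking E δ P), ∑' p : P, h (2 * (p : ℝ × ℝ).2) := by
    intro δ hδ
    set S := ⨆ (P : Set (ℝ × ℝ)) (_ : IsPacking E δ P), ∑' p : P, h (2 * (p : ℝ × ℝ).2)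
      with hS
    have hfin : massOf a E ≠ ∞ := by
      refine ne_top_of_le_ne_top ?_ (measure_mono inter_subset_right)
      simp
    by_cases hz : massOf a E = 0
    · simp [hz]
    rw [← ENNReal.le_div_iff_mul_le (Or.inl hz) (Or.inl hfin)]
    refine limsup_le_of_le (by isBoundedDefault) ?_
    have hev := (maxLen_tendsto apos amono asum).eventually_lt_const hδ
    filter_upwards [hev, eventually_ge_atTop 1] with k hk hk1
    obtain ⟨k, rfl⟩ : ∃ l, k = l + 1 := ⟨k - 1, by omega⟩
    rw [ENNReal.le_div_iff_mul_le (Or.inl hz) (Or.inl hfin)]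
    let J := (Finset.range (2 ^ k)).filter
      fun j => (E ∩ Icc (leftEnd a k j) (rightEnd a k j)).Nonempty
    have h1 := massOf_le apos amono asum E k J (fun j hj hn => by simp [J, hj, hn])
    have hp : ∀ r, ((J.filter fun j => j % 2 = r).card : ℝ≥0∞) * h (maxLen a (k + 1)) ≤ S := by
      intro r
      refine card_mul_le_sup apos amono asum h E k δ hk _ ?_ ?_ ?_
      · intro j hj; simp [J] at hj; exact hj.1.1
      · intro j hj; simp only [J, Finset.mem_filter] at hj; exact hj.1.2
      · intro i hi j hj
        rw [(Finset.mem_filter.1 hi).2, (Finset.mem_filter.1 hj).2]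
    have hc : J.card ≤ (J.filter fun j => j % 2 = 0).card + (J.filter fun j => j % 2 = 1).card := by
      rw [← Finset.card_filter_add_card_filter_not (s := J) (fun j => j % 2 = 0)]
      gcongr with j
      omega
    have hc' : (J.card : ℝ≥0∞) ≤ ((J.filter fun j => j % 2 = 0).card : ℝ≥0∞)
        + ((J.filter fun j => j % 2 = 1).card : ℝ≥0∞) := by exact_mod_cast hc
    calc 2 ^ (k + 1) * h (maxLen a (k + 1)) * massOf a E
        = 2 * ((massOf a E * 2 ^ k) * h (maxLen a (k + 1))) := by ring
      _ ≤ 2 * (J.card * h (maxLen a (k + 1))) := by gcongr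
      _ ≤ 2 * ((((J.filter fun j => j % 2 = 0).card : ℝ≥0∞)
        + ((J.filter fun j => j % 2 = 1).card : ℝ≥0∞)) * h (maxLen a (k + 1))) := by gcongr
      _ ≤ 2 * (S + S) := by
        rw [add_mul]
        gcongr
        · exact hp 0
        · exact hp 1
      _ = 4 * S := by ring
  have h4 : (4 : ℝ≥0∞) ≠ 0 := by norm_num
  have h4' : (4 : ℝ≥0∞) ≠ ∞ := by finiteness
  rw [← ENNReal.div_le_iff' h4 h4']
  refine le_iInf fun δ => le_iInf₂ fun hδ _ => ?_
  rw [ENNReal.div_le_iff' h4 h4']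
  exact key δ hδ

lemma limQ_le_Ph {a : ℕ → ℝ} (apos : ∀ n, 0 < a n)
    (amono : ∀ n, a (n + 1) ≤ a n) (asum : Summable a) (A : ℝ) (h : ℝ → ℝ≥0∞) :
    limQ a h ≤ 4 * Ph A h (cantorSetOf a) := by
  have key : ∀ t : ℕ → Set ℝ, cantorSetOf a = ⋃ n, t n →
      limQ a h ≤ 4 * ∑' n, P0h A h (t n) := by
    intro t ht
    have h1 : (1 : ℝ≥0∞) ≤ ∑' n, massOf a (t n) := by
      calc (1 : ℝ≥0∞) = volume (Ico (0 : ℝ) 1) := by simp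
        _ ≤ volume (⋃ n, (codeMap a ⁻¹' (t n) ∩ Ico (0 : ℝ) 1)) := by
          refine measure_mono fun s hs => ?_
          have := codeMap_mem_cantor apos amono asum hs
          rw [ht, mem_iUnion] at this
          obtain ⟨n, hn⟩ := this
          exact mem_iUnion.2 ⟨n, hn, hs⟩
        _ ≤ _ := measure_iUnion_le _
    calc limQ a h = limQ a h * 1 := (mul_one _).symm
      _ ≤ limQ a h * ∑' n, massOf a (t n) := by gcongr
      _ = ∑' n, limQ a h * massOf a (t n) := ENNReal.tsum_mul_left.symm
      _ ≤ ∑' n, 4 * P0h A h (t n) :=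
        ENNReal.tsum_le_tsum fun n => limQ_mul_mass_le apos amono asum A h (t n)
      _ = _ := ENNReal.tsum_mul_left
  have h4 : (4 : ℝ≥0∞) ≠ 0 := by norm_num
  have h4' : (4 : ℝ≥0∞) ≠ ∞ := by finiteness
  rw [← ENNReal.div_le_iff' h4 h4']
  refine le_iInf₂ fun t ht => ?_
  rw [ENNReal.div_le_iff' h4 h4']
  exact key t ht

lemma P0h_le_limQ {a : ℕ → ℝ} (apos : ∀ n, 0 < a n)
    (amono : ∀ n, a (n + 1) ≤ a n) (asum : Summable a) (A : ℝ) (h : ℝ → ℝ≥0∞)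
    (hd : IsDimFun A h) (τ : ℝ≥0∞) (hτ : τ ≠ 0) (hτ' : τ ≠ ∞)
    (hdoub : ∀ x : ℝ, 0 < x → 2 * x ≤ A → τ * h (2 * x) ≤ h x) :
    P0h A h (cantorSetOf a) ≤ 2 / τ * limQ a h := by
  have hc0 : 2 / τ ≠ 0 := by simp [hτ']
  have hc1 : 2 / τ ≠ ∞ := ENNReal.div_ne_top (by finiteness) hτ
  rw [← ENNReal.div_le_iff' hc0 hc1]
  refine le_of_forall_gt_imp_ge_of_dense fun L hL => ?_
  rw [ENNReal.div_le_iff' hc0 hc1]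
  have hev := eventually_lt_of_limsup_lt hL
  have hev2 := (maxLen_tendsto apos amono asum).eventually_lt_const (half_pos hd.posA)
  obtain ⟨K, hK⟩ := (hev.and hev2).exists_forall_of_atTop
  have hMpos := maxLen_pos apos amono asum
  refine iInf_le_of_le (min A (maxLen a K)) (iInf_le_of_le (lt_min hd.posA (hMpos K))
    (iInf_le_of_le (min_le_left _ _) (iSup₂_le fun P hP => ?_)))
  obtain ⟨hcount, hball, hdisj⟩ := hP
  have hone : ∀ p ∈ P, h (2 * p.2) ≤ 2 / τ * L *
      volume (codeMap a ⁻¹' (Metric.ball p.1 p.2) ∩ Ico (0 : ℝ) 1) := by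
    intro p hp
    obtain ⟨hpC, hr, hrlt⟩ := hball p hp
    have hrA : 2 * p.2 < A := hrlt.trans_le (min_le_left _ _)
    have hrK : 2 * p.2 < maxLen a K := hrlt.trans_le (min_le_right _ _)
    have hex : ∃ k, maxLen a k < p.2 :=
      ((maxLen_tendsto apos amono asum).eventually_lt_const hr).exists
    classical
    obtain ⟨k, hk, hkmin⟩ : ∃ k, maxLen a k < p.2 ∧ ∀ m < k, p.2 ≤ maxLen a m :=
      ⟨Nat.find hex, Nat.find_spec hex, fun m hm => not_lt.1 (Nat.find_min hex hm)⟩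
    have hKk : K < k := by
      by_contra hcon
      have := maxLen_anti apos amono asum (not_lt.1 hcon)
      linarith
    obtain ⟨k, rfl⟩ : ∃ l, k = l + 1 := ⟨k - 1, by omega⟩
    have hrM := hkmin k (by omega)
    obtain ⟨hu, hMA⟩ := hK k (by omega)
    have hM0 := hMpos k
    have e1 : h (2 * p.2) ≤ h (2 * maxLen a k) :=
      hd.strictMonoOn.monotoneOn ⟨by linarith, hrA.le⟩ ⟨by linarith, by linarith⟩ (by linarith)
    have e2 := hdoub (maxLen a k) hM0 (by linarith)
    have e3 : ((2 : ℝ≥0∞) ^ (k + 1))⁻¹ ≤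
        volume (codeMap a ⁻¹' (Metric.ball p.1 p.2) ∩ Ico (0 : ℝ) 1) := by
      have := mem_iInter.1 hpC (k + 1)
      simp only [mem_iUnion, Finset.mem_range] at this
      obtain ⟨j, hj, hpj⟩ := this
      rw [← volume_dyInt (k + 1) j]
      refine measure_mono fun t ht => ⟨?_, dyInt_subset hj ht⟩
      have h1 := codeMap_mem apos amono asum t (k + 1)
      rw [dyIdx_of_mem ht] at h1
      unfold rightEnd at h1
      have h2 : nodeLen a (2 ^ (k + 1) + j) ≤ maxLen a (k + 1) :=
        nodeLen_anti apos amono asum Nat.one_le_two_pow (by omega)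
      rw [mem_preimage, Metric.mem_ball, Real.dist_eq, abs_lt]
      constructor <;> linarith [h1.1, h1.2, hpj.1, hpj.2]
    have e4 : h (maxLen a k) ≤ L * (2 * (2 ^ (k + 1))⁻¹) := by
      have : (2 : ℝ≥0∞) * (2 ^ (k + 1))⁻¹ = (2 ^ k)⁻¹ := by
        rw [pow_succ, ENNReal.mul_inv (by simp) (by simp), mul_comm, mul_assoc,
          ENNReal.inv_mul_cancel (by simp) (by simp), mul_one]
      rw [this, ← div_eq_mul_inv, ENNReal.le_div_iff_mul_le (by simp) (by simp), mul_comm]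
      exact hu.le
    calc h (2 * p.2) ≤ h (2 * maxLen a k) := e1
      _ ≤ h (maxLen a k) / τ := by
        rw [ENNReal.le_div_iff_mul_le (Or.inl hτ) (Or.inl hτ'), mul_comm]; exact e2
      _ ≤ (L * (2 * (2 ^ (k + 1))⁻¹)) / τ := by gcongr
      _ = 2 / τ * L * (2 ^ (k + 1))⁻¹ := by simp only [div_eq_mul_inv]; ring
      _ ≤ _ := by gcongr
  have hmeas := codeMap_measurable apos amono asum
  calc ∑' p : P, h (2 * (p : ℝ × ℝ).2)
      ≤ ∑' p : P, 2 / τ * L *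
        volume (codeMap a ⁻¹' (Metric.ball (p : ℝ × ℝ).1 (p : ℝ × ℝ).2) ∩ Ico (0 : ℝ) 1) :=
        ENNReal.tsum_le_tsum fun p => hone p p.2
    _ = 2 / τ * L * ∑' p : P,
        volume (codeMap a ⁻¹' (Metric.ball (p : ℝ × ℝ).1 (p : ℝ × ℝ).2) ∩ Ico (0 : ℝ) 1) :=
        ENNReal.tsum_mul_left
    _ ≤ 2 / τ * L * 1 := by
        gcongr
        refine le_trans (tsum_meas_le_meas_iUnion_of_disjoint volume
          (fun p => (hmeas measurableSet_ball).inter measurableSet_Ico) ?_) ?_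
        · intro p q hpq
          have := hdisj p.2 q.2 (fun e => hpq (Subtype.ext e))
          exact ((this.preimage (codeMap a)).mono inter_subset_left inter_subset_left)
        · refine (measure_mono (iUnion_subset fun p => inter_subset_right)).trans ?_
          simp
    _ = 2 / τ * L := mul_one _

lemma P0h_empty (A : ℝ) (hA : 0 < A) (h : ℝ → ℝ≥0∞) : P0h A h ∅ = 0 := by
  refine le_antisymm ?_ bot_le
  refine iInf_le_of_le A (iInf_le_of_le hA (iInf_le_of_le le_rfl (iSup₂_le fun P hP => ?_)))
  have : P = ∅ := by
    refine eq_empty_of_forall_notMem fun p hp => (hP.2.1 p hp).1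
  subst this
  simp

lemma Ph_le_P0h (A : ℝ) (hA : 0 < A) (h : ℝ → ℝ≥0∞) (E : Set ℝ) : Ph A h E ≤ P0h A h E := by
  refine iInf₂_le_of_le (fun n => if n = 0 then E else ∅) ?_ ?_
  · ext x; simp
  · rw [tsum_eq_single 0]
    · simp
    · intro n hn; simp [hn, P0h_empty A hA h]

end PrepackingHelpers

/-- Corollary (i): for the Cantor set `C_a` and any dimension
function `h`: `P₀^h(C_a) = 0 ↔ P^h(C_a) = 0`, `P₀^h(C_a) = ∞ ↔ P^h(C_a) = ∞`,
and `0 < P₀^h(C_a) < ∞ ↔ 0 < P^h(C_a) < ∞`. -/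
theorem prepacking_iff_packing_cantor (A : ℝ) (a : ℕ → ℝ)
    (apos : ∀ n, 0 < a n) (amono : ∀ n, a (n + 1) ≤ a n) (asum : Summable a)
    (h : ℝ → ℝ≥0∞) (hd : IsDimFun A h) :
    (P0h A h (cantorSetOf a) = 0 ↔ Ph A h (cantorSetOf a) = 0) ∧
    (P0h A h (cantorSetOf a) = ∞ ↔ Ph A h (cantorSetOf a) = ∞) ∧
    (0 < P0h A h (cantorSetOf a) ∧ P0h A h (cantorSetOf a) < ∞ ↔
      0 < Ph A h (cantorSetOf a) ∧ Ph A h (cantorSetOf a) < ∞) := by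
  obtain ⟨τ, hτ, hτ', hdoub⟩ := hd.doubling
  have h1 := Ph_le_P0h A hd.posA h (cantorSetOf a)
  have h2 : P0h A h (cantorSetOf a) ≤ 2 / τ * (4 * Ph A h (cantorSetOf a)) :=
    (P0h_le_limQ apos amono asum A h hd τ hτ.ne' hτ' hdoub).trans
      (by gcongr; exact limQ_le_Ph apos amono asum A h)
  have hc1 : 2 / τ ≠ ∞ := ENNReal.div_ne_top (by finiteness) hτ.ne'
  have e0 : P0h A h (cantorSetOf a) = 0 ↔ Ph A h (cantorSetOf a) = 0 := by
    constructor
    · intro e; rw [e] at h1; exact le_antisymm h1 bot_le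
    · intro e; rw [e] at h2; simpa using h2
  have e1 : P0h A h (cantorSetOf a) = ∞ ↔ Ph A h (cantorSetOf a) = ∞ := by
    constructor
    · intro e
      by_contra hne
      rw [e, top_le_iff] at h2
      exact ENNReal.mul_ne_top hc1 (ENNReal.mul_ne_top (by finiteness) hne) h2
    · intro e; rw [e, top_le_iff] at h1; exact h1
  refine ⟨e0, e1, ?_⟩
  rw [pos_iff_ne_zero, pos_iff_ne_zero, lt_top_iff_ne_top, lt_top_iff_ne_top, Ne, Ne, Ne, Ne, e0, e1]
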